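/- For every integer e ≥ 1 and general points: ℓ(L(9e, 9e−3, 6^{2e})) = 0 (with virtual dimension −6e − 3), and ℓ(L(9e+1, 9e−2, 6^{2e})) = 2 (with virtual dimension −6e + 1); in particular both systems are special. -/

import Mathlib

open MvPolynomial

/-- The iterated partial derivative corresponding to the multi-index `ν`. -/
noncomputable def mderiv (ν : Fin 3 → ℕ) :
    MvPolynomial (Fin 3) ℂ →ₗ[ℂ] MvPolynomial (Fin 3) ℂ :=
  ((pderiv (R := ℂ) (0 : Fin 3)).toLinearMap ^ ν 0) ∘ₗ
  ((pderiv (R := ℂ) (1 : Fin 3)).toLinearMap ^ ν 1) ∘ₗ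
  ((pderiv (R := ℂ) (2 : Fin 3)).toLinearMap ^ ν 2)

/-- The linear system `L(d; m)` of homogeneous forms of degree `d` in three variables
all of whose partial derivatives of order `< m i` vanish at the point `p i`,
i.e. plane curves of degree `d` with multiplicity at least `m i` at `p i`. -/
noncomputable def linSys {k : ℕ} (p : Fin k → Fin 3 → ℂ) (d : ℕ) (m : Fin k → ℕ) :
    Submodule ℂ (MvPolynomial (Fin 3) ℂ) :=
  (homogeneousSubmodule (Fin 3) ℂ d) ⊓
    ⨅ (i : Fin k), ⨅ (ν : Fin 3 → ℕ), ⨅ (_ : ν 0 + ν 1 + ν 2 < m i),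
      LinearMap.ker ((aeval (p i)).toLinearMap ∘ₗ mderiv ν)

/-- The projective dimension `ℓ` of the linear system (`-1` means empty). -/
noncomputable def projDim {k : ℕ} (p : Fin k → Fin 3 → ℂ) (d : ℕ) (m : Fin k → ℕ) : ℤ :=
  (Module.finrank ℂ (linSys p d m) : ℤ) - 1

/-- The virtual dimension `v = d(d+3)/2 - ∑ mᵢ(mᵢ+1)/2`. -/
def virtDim {k : ℕ} (d : ℕ) (m : Fin k → ℕ) : ℤ :=
  ((d : ℤ) * (d + 3)) / 2 - ∑ i : Fin k, ((m i : ℤ) * (m i + 1)) / 2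

/-- The quasi-homogeneous multiplicity vector `(m₀, 6, …, 6)` on `n + 1` points. -/
def qh (n m0 : ℕ) : Fin (n + 1) → ℕ := fun i => if i = 0 then m0 else 6

/-- A property `Q` of configurations of `k` points of `ℙ²` (given by nonzero homogeneous
coordinate vectors) holds for points in general position: there is a nonzero polynomial
in the coordinates such that `Q` holds whenever it does not vanish. -/
def Generically (k : ℕ) (Q : (Fin k → Fin 3 → ℂ) → Prop) : Prop :=
  ∃ P : MvPolynomial (Fin k × Fin 3) ℂ, P ≠ 0 ∧
    ∀ p : Fin k → Fin 3 → ℂ, (∀ i, p i ≠ 0) →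
      eval (fun x => p x.1 x.2) P ≠ 0 → Q p

theorem isHomogeneous_aeval_mul_left {σ R S : Type*} [CommSemiring R]
    [CommSemiring S] [Algebra R S] {F : MvPolynomial σ R} {n : ℕ} (hF : F.IsHomogeneous n)
    (c : S) (f : σ → S) : aeval (fun j => c * f j) F = c ^ n * aeval f F := by
  classical
  rw [aeval_def, aeval_def, eval₂_eq, eval₂_eq, Finset.mul_sum]
  refine Finset.sum_congr rfl fun s hs => ?_
  have hd : n = ∑ i ∈ s.support, s i := hF.degree_eq_sum_deg_support hs
  simp only [mul_pow, Finset.prod_mul_distrib, Finset.prod_pow_eq_pow_sum, ← hd]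
  ring

/-- Order of vanishing at least `m` at `p`, by recursion on partial derivatives. -/
def VanishesToOrder {σ : Type*} (p : σ → ℂ) : ℕ → MvPolynomial σ ℂ → Prop
  | 0, _ => True
  | m + 1, F => eval p F = 0 ∧ ∀ i, VanishesToOrder p m (pderiv i F)

theorem derivation_aeval {σ S : Type*} [Fintype σ] [CommRing S] [Algebra ℂ S]
    (D : Derivation ℂ S S) (f : σ → S) (F : MvPolynomial σ ℂ) :
    D (aeval f F) = ∑ i, aeval f (pderiv i F) * D (f i) := by
  classical
  induction F using MvPolynomial.induction_on with
  | C a => simp [← MvPolynomial.algebraMap_eq]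
  | add P Q hP hQ => simp [hP, hQ, add_mul, Finset.sum_add_distrib]
  | mul_X P j hP =>
    simp only [map_mul, aeval_X, Derivation.leibniz, hP, smul_eq_mul, pderiv_X, map_add,
      add_mul, Finset.sum_add_distrib, Finset.mul_sum]
    congr 1
    · rw [Finset.sum_eq_single j]
      · simp
      · intro b _ hb
        simp [hb.symm]
      · simp
    · exact Finset.sum_congr rfl fun i _ => by ring

namespace VanishesToOrder

variable {σ : Type*} {p : σ → ℂ} {m n : ℕ} {F G : MvPolynomial σ ℂ}

theorem of_zero (p : σ → ℂ) (F : MvPolynomial σ ℂ) : VanishesToOrder p 0 F := trivial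

theorem zero (p : σ → ℂ) (m : ℕ) : VanishesToOrder p m 0 := by
  induction m with
  | zero => trivial
  | succ m ih => exact ⟨by simp, fun i => by simpa using ih⟩

theorem add (hF : VanishesToOrder p m F) (hG : VanishesToOrder p m G) :
    VanishesToOrder p m (F + G) := by
  induction m generalizing F G with
  | zero => trivial
  | succ m ih =>
    exact ⟨by simp [hF.1, hG.1], fun i => by simpa using ih (hF.2 i) (hG.2 i)⟩

theorem sum {ι : Type*} {s : Finset ι} {f : ι → MvPolynomial σ ℂ}
    (h : ∀ i ∈ s, VanishesToOrder p m (f i)) : VanishesToOrder p m (∑ i ∈ s, f i) :=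
  Finset.sum_induction _ _ (fun _ _ => add) (zero p m) h

theorem of_succ (hF : VanishesToOrder p (m + 1) F) : VanishesToOrder p m F := by
  induction m generalizing F with
  | zero => trivial
  | succ m ih => exact ⟨hF.1, fun i => ih (hF.2 i)⟩

theorem mono (h : n ≤ m) (hF : VanishesToOrder p m F) : VanishesToOrder p n F := by
  induction h with
  | refl => exact hF
  | step _ ih => exact ih hF.of_succ

theorem mul (hF : VanishesToOrder p m F) (hG : VanishesToOrder p n G) :
    VanishesToOrder p (m + n) (F * G) := by
  obtain ⟨N, hN⟩ : ∃ N, N = m + n := ⟨_, rfl⟩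
  rw [← hN]
  induction N generalizing m n F G with
  | zero => trivial
  | succ N ih =>
    refine ⟨?_, fun i => ?_⟩
    · rcases m with _ | m
      · obtain rfl : n = N + 1 := by omega
        simp [hG.1]
      · simp [hF.1]
    · rw [pderiv_mul]
      refine add ?_ ?_
      · rcases m with _ | m
        · exact ih (m := 0) (of_zero _ _) (mono (n := N) (by omega) hG) (by omega)
        · exact ih (hF.2 i) hG (by omega)
      · rcases n with _ | n
        · exact ih (mono (n := N) (by omega) hF) (n := 0) (of_zero _ _) (by omega)
        · exact ih hF (hG.2 i) (by omega)

theorem mul_left (G : MvPolynomial σ ℂ) (hF : VanishesToOrder p m F) :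
    VanishesToOrder p m (G * F) := by
  simpa using mul (of_zero p G) hF

theorem pow (hF : VanishesToOrder p m F) (k : ℕ) : VanishesToOrder p (k * m) (F ^ k) := by
  induction k with
  | zero => simpa using of_zero p 1
  | succ k ih => rw [pow_succ, add_mul, one_mul]; exact ih.mul hF

theorem prod {ι : Type*} {s : Finset ι} {f : ι → MvPolynomial σ ℂ} {k : ι → ℕ}
    (h : ∀ i ∈ s, VanishesToOrder p (k i) (f i)) :
    VanishesToOrder p (∑ i ∈ s, k i) (∏ i ∈ s, f i) := by
  classical
  induction s using Finset.induction_on with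
  | empty => simpa using of_zero p 1
  | insert a s ha ih =>
    rw [Finset.sum_insert ha, Finset.prod_insert ha]
    exact (h a (by simp)).mul (ih fun i hi => h i (by simp [hi]))

/-- A homogeneous polynomial expression in polynomials vanishing to order `m`. -/
theorem aeval_of_isHomogeneous {τ : Type*} {d : ℕ} {H : MvPolynomial τ ℂ}
    (hH : H.IsHomogeneous d) {f : τ → MvPolynomial σ ℂ} (hf : ∀ j, VanishesToOrder p m (f j)) :
    VanishesToOrder p (d * m) (aeval f H) := by
  classical
  rw [aeval_def, eval₂_eq]
  refine sum fun s hs => mul_left _ ?_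
  have hd : d = ∑ i ∈ s.support, s i := hH.degree_eq_sum_deg_support hs
  rw [hd, Finset.sum_mul]
  exact prod fun j _ => (hf j).pow _

/-- Pulling back along a polynomial substitution preserves the order of vanishing. -/
theorem aeval_comp {τ : Type*} [Fintype τ] {H : MvPolynomial τ ℂ} (f : τ → MvPolynomial σ ℂ)
    (hH : VanishesToOrder (fun j => eval p (f j)) m H) : VanishesToOrder p m (aeval f H) := by
  induction m generalizing H with
  | zero => trivial
  | succ m ih =>
    refine ⟨?_, fun i => ?_⟩
    · rw [← hH.1, ← aeval_eq_eval, ← aeval_eq_eval, ← comp_aeval_apply]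
    · rw [derivation_aeval]
      exact sum fun j _ => by rw [mul_comm]; exact mul_left _ (ih (hH.2 j))

theorem X_pow_dvd_aeval {τ S : Type*} [Fintype τ] [CommRing S] [Algebra ℂ S]
    {q : τ → ℂ} {H : MvPolynomial τ ℂ} {d : ℕ} (hd : H.IsHomogeneous d)
    (hH : VanishesToOrder q m H) (c : S) (r : τ → S) :
    (Polynomial.X : Polynomial S) ^ m ∣ aeval (fun j => Polynomial.C (c * algebraMap ℂ S (q j)) +
      Polynomial.C (r j) * Polynomial.X) H := by
  induction m generalizing H d with
  | zero => simp
  | succ m ih =>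
    set f := aeval (fun j => Polynomial.C (c * algebraMap ℂ S (q j)) +
      Polynomial.C (r j) * Polynomial.X) H with hf
    have hder : Polynomial.X ^ m ∣ Polynomial.derivative f := by
      have := derivation_aeval ((Polynomial.derivative' (R := S)).restrictScalars ℂ)
        (fun j => Polynomial.C (c * algebraMap ℂ S (q j)) + Polynomial.C (r j) * Polynomial.X) H
      rw [← hf] at this
      change Polynomial.derivative f = _ at this
      rw [this]
      exact Finset.dvd_sum fun i _ => Dvd.dvd.mul_right (ih hd.pderiv (hH.2 i)) _
    rw [Polynomial.X_pow_dvd_iff] at hder ⊢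
    rintro (_ | k) hk
    · have : f.coeff 0 = aeval (fun j => c * algebraMap ℂ S (q j)) H := by
        rw [Polynomial.coeff_zero_eq_aeval_zero, hf, ← AlgHom.restrictScalars_apply ℂ,
          comp_aeval_apply]
        simp
      have hq := aeval_algebraMap_apply S q H
      rw [aeval_eq_eval, hH.1, map_zero] at hq
      rw [this, isHomogeneous_aeval_mul_left hd]
      exact mul_eq_zero_of_right _ hq
    · have h := hder k (by omega)
      rw [Polynomial.coeff_derivative] at h
      have hu : IsUnit ((k : S) + 1) := by
        have := (IsUnit.mk0 ((k : ℂ) + 1) (by exact_mod_cast k.succ_ne_zero)).map (algebraMap ℂ S)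
        simpa using this
      exact hu.mul_left_eq_zero.1 h

/-- If `g ≡ c • q` modulo `D`, then `H(g)` is divisible by `D ^ m`. -/
theorem pow_dvd_aeval {τ S : Type*} [Fintype τ] [CommRing S] [Algebra ℂ S]
    {q : τ → ℂ} {H : MvPolynomial τ ℂ} {d : ℕ} (hd : H.IsHomogeneous d)
    (hH : VanishesToOrder q m H) {D c : S} {g : τ → S}
    (hg : ∀ j, D ∣ g j - c * algebraMap ℂ S (q j)) : D ^ m ∣ aeval g H := by
  choose r hr using hg
  have h := map_dvd ((Polynomial.aeval D).restrictScalars ℂ) (hH.X_pow_dvd_aeval hd c r)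
  rw [comp_aeval_apply] at h
  convert h using 1
  · simp
  · congr 2
    ext j
    simp only [AlgHom.coe_restrictScalars', map_add, map_mul, Polynomial.aeval_C,
      Algebra.algebraMap_self, RingHom.id_apply, Polynomial.aeval_X]
    linear_combination hr j

end VanishesToOrder

theorem pderiv_pderiv_comm {σ R : Type*} [CommRing R] (i j : σ) (F : MvPolynomial σ R) :
    pderiv i (pderiv j F) = pderiv j (pderiv i F) := by
  classical
  have h : ⁅pderiv (R := R) i, pderiv (R := R) j⁆ = 0 := by
    refine derivation_ext fun k => ?_
    simp [Derivation.commutator_apply, pderiv_X, Pi.single_apply, apply_ite]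
  have := congrArg (fun D : Derivation R (MvPolynomial σ R) (MvPolynomial σ R) => D F) h
  simpa [Derivation.commutator_apply, sub_eq_zero] using this

theorem mderiv_pderiv (ν : Fin 3 → ℕ) (i : Fin 3) (F : MvPolynomial (Fin 3) ℂ) :
    mderiv ν (pderiv i F) = mderiv (ν + Pi.single i 1) F := by
  set P : Fin 3 → Module.End ℂ (MvPolynomial (Fin 3) ℂ) := fun i => (pderiv i).toLinearMap with hP
  have hc : ∀ i j, Commute (P i) (P j) := fun i j =>
    LinearMap.ext fun F => pderiv_pderiv_comm i j F
  have key : ∀ ν : Fin 3 → ℕ, mderiv ν = P 0 ^ ν 0 * (P 1 ^ ν 1 * P 2 ^ ν 2) := fun ν => rfl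
  have : mderiv ν * P i = mderiv (ν + Pi.single i 1) := by
    rw [key, key]
    fin_cases i
    · have := (((hc 0 1).pow_right (ν 1)).mul_right ((hc 0 2).pow_right (ν 2))).eq
      simp [pow_succ, mul_assoc, ← this]
    · simp [pow_succ, mul_assoc, ((hc 1 2).pow_right _).eq]
    · simp [pow_succ, mul_assoc]
  exact congrArg (fun T => T F) this

theorem vanishesToOrder_iff (p : Fin 3 → ℂ) (m : ℕ) (F : MvPolynomial (Fin 3) ℂ) :
    VanishesToOrder p m F ↔
      ∀ ν : Fin 3 → ℕ, ν 0 + ν 1 + ν 2 < m → aeval p (mderiv ν F) = 0 := by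
  induction m generalizing F with
  | zero => simp [VanishesToOrder]
  | succ m ih =>
    constructor
    · rintro ⟨h0, h⟩ ν hν
      by_cases hz : ∃ i, ν i ≠ 0
      · obtain ⟨i, hi⟩ := hz
        have hs : ν = (ν - Pi.single i 1) + Pi.single i 1 := by
          refine (tsub_add_cancel_of_le ?_).symm
          intro j
          obtain rfl | hj := eq_or_ne j i
          · simpa using Nat.one_le_iff_ne_zero.2 hi
          · simp [hj]
        rw [hs, ← mderiv_pderiv]
        refine (ih _).1 (h i) _ ?_
        have hsum := congrArg (fun μ : Fin 3 → ℕ => μ 0 + μ 1 + μ 2) hs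
        have h1 : (Pi.single i 1 : Fin 3 → ℕ) 0 + (Pi.single i 1 : Fin 3 → ℕ) 1 +
            (Pi.single i 1 : Fin 3 → ℕ) 2 = 1 := by fin_cases i <;> simp
        simp only [Pi.add_apply] at hsum
        omega
      · push Not at hz
        obtain rfl : ν = 0 := funext hz
        simpa [mderiv, aeval_eq_eval] using h0
    · intro h
      refine ⟨by simpa [mderiv, aeval_eq_eval] using h 0 (by simp), fun i => (ih _).2 ?_⟩
      intro ν hν
      rw [mderiv_pderiv]
      refine h _ ?_
      have h1 : (Pi.single i 1 : Fin 3 → ℕ) 0 + (Pi.single i 1 : Fin 3 → ℕ) 1 +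
          (Pi.single i 1 : Fin 3 → ℕ) 2 = 1 := by fin_cases i <;> simp
      simp only [Pi.add_apply]
      omega

theorem mem_linSys {k : ℕ} {p : Fin k → Fin 3 → ℂ} {d : ℕ} {m : Fin k → ℕ}
    {F : MvPolynomial (Fin 3) ℂ} :
    F ∈ linSys p d m ↔ F.IsHomogeneous d ∧ ∀ i, VanishesToOrder (p i) (m i) F := by
  simp only [linSys, Submodule.mem_inf, mem_homogeneousSubmodule, Submodule.mem_iInf,
    vanishesToOrder_iff]
  rfl

theorem aeval_mem_linSys {k : ℕ} {p q : Fin k → Fin 3 → ℂ} {d : ℕ} {m : Fin k → ℕ}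
    {f : Fin 3 → MvPolynomial (Fin 3) ℂ} (hf : ∀ j, (f j).IsHomogeneous 1)
    (hq : ∀ i, (fun j => eval (p i) (f j)) = q i) {F : MvPolynomial (Fin 3) ℂ}
    (hF : F ∈ linSys q d m) : aeval f F ∈ linSys p d m := by
  rw [mem_linSys] at hF ⊢
  refine ⟨by simpa using hF.1.aeval f hf, fun i => VanishesToOrder.aeval_comp f ?_⟩
  rw [hq]
  exact hF.2 i

theorem aeval_aeval_eq_self {σ τ R : Type*} [CommRing R] {f : σ → MvPolynomial τ R}
    {g : τ → MvPolynomial σ R} (h : ∀ j, aeval f (g j) = X j) (F : MvPolynomial τ R) :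
    aeval f (aeval g F) = F := by
  rw [comp_aeval_apply, funext h, aeval_X_left, AlgHom.id_apply]

/-- A linear change of coordinates preserves the dimension of a linear system. -/
theorem finrank_linSys_eq {k : ℕ} {p q : Fin k → Fin 3 → ℂ} (d : ℕ) (m : Fin k → ℕ)
    {f g : Fin 3 → MvPolynomial (Fin 3) ℂ} (hf : ∀ j, (f j).IsHomogeneous 1)
    (hg : ∀ j, (g j).IsHomogeneous 1) (hfg : ∀ j, aeval f (g j) = X j)
    (hgf : ∀ j, aeval g (f j) = X j) (hq : ∀ i, (fun j => eval (p i) (f j)) = q i) :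
    Module.finrank ℂ (linSys p d m) = Module.finrank ℂ (linSys q d m) := by
  have hp : ∀ i, (fun j => eval (q i) (g j)) = p i := by
    intro i
    ext j
    have := congrArg (eval (p i)) (hfg j)
    rw [eval_X, ← aeval_eq_eval, ← AlgHom.coe_restrictScalars' ℂ, comp_aeval_apply] at this
    rw [← this, ← hq i]
    simp [aeval_eq_eval]
  refine LinearEquiv.finrank_eq (LinearEquiv.ofLinearMap
    ((aeval g).toLinearMap.restrict (p := linSys p d m) (q := linSys q d m)
      fun F hF => aeval_mem_linSys hg hp hF)
    ((aeval f).toLinearMap.restrict (p := linSys q d m) (q := linSys p d m)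
      fun F hF => aeval_mem_linSys hf hq hF) ?_ ?_)
  · exact LinearMap.ext fun F => Subtype.ext (aeval_aeval_eq_self hgf F.1)
  · exact LinearMap.ext fun F => Subtype.ext (aeval_aeval_eq_self hfg F.1)

theorem irreducible_X_sub_C_mul_X {σ K : Type*} [Field K] {i j : σ} (hij : i ≠ j) (s : K) :
    Irreducible (X i - C s * X j : MvPolynomial σ K) := by
  classical
  have hc : coeff (Finsupp.single i 1) (X i - C s * X j : MvPolynomial σ K) = 1 := by
    simp [coeff_X, coeff_C_mul, Finsupp.single_left_inj, hij.symm]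
  have hne : (X i - C s * X j : MvPolynomial σ K) ≠ 0 := fun h => by simp [h] at hc
  refine irreducible_of_totalDegree_eq_one ?_ fun x hx => ?_
  · exact ((isHomogeneous_X K i).sub (by simpa using (isHomogeneous_X K j).C_mul s)).totalDegree hne
  · exact isUnit_of_dvd_one (hc ▸ hx (Finsupp.single i 1))

/-- A de Jonquières transformation of the plane, of degree `k + 2`, given by the coefficients
`a, b, a', b'` of `z ↦ (a' z + b') / (a z + b)`. -/
structure DeJonquieres (k : ℕ) where
  a : MvPolynomial (Fin 2) ℂ
  b : MvPolynomial (Fin 2) ℂ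
  a' : MvPolynomial (Fin 2) ℂ
  b' : MvPolynomial (Fin 2) ℂ
  ha : a.IsHomogeneous k
  hb : b.IsHomogeneous (k + 1)
  ha' : a'.IsHomogeneous (k + 1)
  hb' : b'.IsHomogeneous (k + 2)

/-- A binary form viewed as a ternary form. -/
noncomputable def ternary (q : MvPolynomial (Fin 2) ℂ) : MvPolynomial (Fin 3) ℂ :=
  rename Fin.castSucc q

theorem aeval_ternary {S : Type*} [CommRing S] [Algebra ℂ S] (q : MvPolynomial (Fin 2) ℂ)
    (g : Fin 3 → S) : aeval g (ternary q) = aeval ![g 0, g 1] q := by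
  rw [ternary, aeval_rename]
  congr 2
  ext i
  fin_cases i <;> rfl

theorem isHomogeneous_ternary {q : MvPolynomial (Fin 2) ℂ} {n : ℕ} (hq : q.IsHomogeneous n) :
    (ternary q).IsHomogeneous n :=
  hq.rename_isHomogeneous

theorem aeval_ternary_of_mul {S : Type*} [CommRing S] [Algebra ℂ S] {q : MvPolynomial (Fin 2) ℂ}
    {n : ℕ} (hq : q.IsHomogeneous n) (r x y z : S) :
    aeval ![x * r, y * r, z] (ternary q) = r ^ n * aeval ![x, y] q := by
  rw [aeval_ternary, ← isHomogeneous_aeval_mul_left hq]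
  congr 2
  ext i
  fin_cases i <;> exact mul_comm _ _

theorem aeval_ternary_X_X {q : MvPolynomial (Fin 2) ℂ} :
    aeval ![(X 0 : MvPolynomial (Fin 3) ℂ), X 1] q = ternary q := by
  have := aeval_ternary q (X : Fin 3 → MvPolynomial (Fin 3) ℂ)
  rw [aeval_X_left, AlgHom.id_apply] at this
  exact this.symm

theorem vanishesToOrder_ternary {q : MvPolynomial (Fin 2) ℂ} {n : ℕ} (hq : q.IsHomogeneous n)
    (c : ℂ) : VanishesToOrder ![0, 0, c] n (ternary q) := by
  rw [← aeval_ternary_X_X]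
  have := VanishesToOrder.aeval_of_isHomogeneous (p := ![0, 0, c]) (m := 1) hq
    (f := ![(X 0 : MvPolynomial (Fin 3) ℂ), X 1]) ?_
  · simpa using this
  · intro j
    fin_cases j <;> simp [VanishesToOrder]

namespace DeJonquieres

variable {k : ℕ} (T : DeJonquieres k)

/-- The determinant of the transformation. -/
noncomputable def det : MvPolynomial (Fin 3) ℂ :=
  ternary T.a * ternary T.b' - ternary T.a' * ternary T.b

/-- The denominator of the transformation. -/
noncomputable def u : MvPolynomial (Fin 3) ℂ := ternary T.a * X 2 + ternary T.b

/-- The numerator of the transformation. -/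
noncomputable def v : MvPolynomial (Fin 3) ℂ := ternary T.a' * X 2 + ternary T.b'

/-- The denominator of the inverse transformation. -/
noncomputable def w : MvPolynomial (Fin 3) ℂ := ternary T.a * X 2 - ternary T.a'

/-- The numerator of the inverse transformation. -/
noncomputable def t : MvPolynomial (Fin 3) ℂ := ternary T.b' - ternary T.b * X 2

/-- Coordinates of the transformation. -/
noncomputable def fwd : Fin 3 → MvPolynomial (Fin 3) ℂ := ![X 0 * T.u, X 1 * T.u, T.v]

/-- Coordinates of the inverse transformation. -/
noncomputable def bwd : Fin 3 → MvPolynomial (Fin 3) ℂ := ![X 0 * T.w, X 1 * T.w, T.t]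

theorem isHomogeneous_det : T.det.IsHomogeneous (2 * k + 2) := by
  have h1 := (isHomogeneous_ternary T.ha).mul (isHomogeneous_ternary T.hb')
  have h2 := (isHomogeneous_ternary T.ha').mul (isHomogeneous_ternary T.hb)
  rw [show k + (k + 2) = 2 * k + 2 by ring] at h1
  rw [show k + 1 + (k + 1) = 2 * k + 2 by ring] at h2
  exact h1.sub h2

theorem isHomogeneous_u : T.u.IsHomogeneous (k + 1) :=
  ((isHomogeneous_ternary T.ha).mul (isHomogeneous_X ℂ 2)).add (isHomogeneous_ternary T.hb)

theorem isHomogeneous_v : T.v.IsHomogeneous (k + 2) :=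
  ((isHomogeneous_ternary T.ha').mul (isHomogeneous_X ℂ 2)).add (isHomogeneous_ternary T.hb')

theorem isHomogeneous_w : T.w.IsHomogeneous (k + 1) :=
  ((isHomogeneous_ternary T.ha).mul (isHomogeneous_X ℂ 2)).sub (isHomogeneous_ternary T.ha')

theorem isHomogeneous_t : T.t.IsHomogeneous (k + 2) :=
  (isHomogeneous_ternary T.hb').sub ((isHomogeneous_ternary T.hb).mul (isHomogeneous_X ℂ 2))

theorem isHomogeneous_fwd (j : Fin 3) : (T.fwd j).IsHomogeneous (k + 2) := by
  have h (i : Fin 3) : (X i * T.u).IsHomogeneous (k + 2) := by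
    rw [show k + 2 = 1 + (k + 1) by ring]
    exact (isHomogeneous_X ℂ i).mul T.isHomogeneous_u
  fin_cases j
  exacts [h 0, h 1, T.isHomogeneous_v]

theorem isHomogeneous_bwd (j : Fin 3) : (T.bwd j).IsHomogeneous (k + 2) := by
  have h (i : Fin 3) : (X i * T.w).IsHomogeneous (k + 2) := by
    rw [show k + 2 = 1 + (k + 1) by ring]
    exact (isHomogeneous_X ℂ i).mul T.isHomogeneous_w
  fin_cases j
  exacts [h 0, h 1, T.isHomogeneous_t]

theorem aeval_fwd_ternary {q : MvPolynomial (Fin 2) ℂ} {n : ℕ} (hq : q.IsHomogeneous n) :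
    aeval T.fwd (ternary q) = T.u ^ n * ternary q := by
  rw [fwd, aeval_ternary_of_mul hq, aeval_ternary_X_X]

theorem aeval_bwd_ternary {q : MvPolynomial (Fin 2) ℂ} {n : ℕ} (hq : q.IsHomogeneous n) :
    aeval T.bwd (ternary q) = T.w ^ n * ternary q := by
  rw [bwd, aeval_ternary_of_mul hq, aeval_ternary_X_X]

theorem aeval_fwd_det : aeval T.fwd T.det = T.u ^ (2 * k + 2) * T.det := by
  simp only [det, map_sub, map_mul, T.aeval_fwd_ternary T.ha, T.aeval_fwd_ternary T.hb,
    T.aeval_fwd_ternary T.ha', T.aeval_fwd_ternary T.hb']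
  ring

theorem aeval_fwd_w : aeval T.fwd T.w = T.u ^ k * T.det := by
  simp only [w, map_sub, map_mul, T.aeval_fwd_ternary T.ha, T.aeval_fwd_ternary T.ha', aeval_X]
  simp only [fwd, Matrix.cons_val]
  simp only [u, v, det]
  ring

theorem aeval_fwd_t : aeval T.fwd T.t = T.u ^ (k + 1) * T.det * X 2 := by
  simp only [t, map_sub, map_mul, T.aeval_fwd_ternary T.hb, T.aeval_fwd_ternary T.hb', aeval_X]
  simp only [fwd, Matrix.cons_val]
  simp only [u, v, det]
  ring

theorem aeval_bwd_u : aeval T.bwd T.u = T.w ^ k * T.det := by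
  simp only [u, map_add, map_mul, T.aeval_bwd_ternary T.ha, T.aeval_bwd_ternary T.hb, aeval_X]
  simp only [bwd, Matrix.cons_val]
  simp only [w, t, det]
  ring

theorem aeval_bwd_v : aeval T.bwd T.v = T.w ^ (k + 1) * T.det * X 2 := by
  simp only [v, map_add, map_mul, T.aeval_bwd_ternary T.ha', T.aeval_bwd_ternary T.hb', aeval_X]
  simp only [bwd, Matrix.cons_val]
  simp only [w, t, det]
  ring

theorem aeval_fwd_bwd (j : Fin 3) : aeval T.fwd (T.bwd j) = T.u ^ (k + 1) * T.det * X j := by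
  fin_cases j
  · simp only [bwd, Fin.zero_eta, Matrix.cons_val, map_mul, aeval_fwd_w, aeval_X]
    simp only [fwd, Matrix.cons_val]
    ring
  · simp only [bwd, Fin.mk_one, Matrix.cons_val, map_mul, aeval_fwd_w, aeval_X]
    simp only [fwd, Matrix.cons_val]
    ring
  · exact T.aeval_fwd_t

theorem aeval_bwd_fwd (j : Fin 3) : aeval T.bwd (T.fwd j) = T.w ^ (k + 1) * T.det * X j := by
  fin_cases j
  · simp only [fwd, Fin.zero_eta, Matrix.cons_val, map_mul, aeval_bwd_u, aeval_X]
    simp only [bwd, Matrix.cons_val]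
    ring
  · simp only [fwd, Fin.mk_one, Matrix.cons_val, map_mul, aeval_bwd_u, aeval_X]
    simp only [bwd, Matrix.cons_val]
    ring
  · exact T.aeval_bwd_v

theorem det_eq_mul_v_sub : T.det = ternary T.a * T.v - ternary T.a' * T.u := by
  simp only [u, v, det]
  ring

theorem aeval_fwd_aeval_bwd {d : ℕ} {F : MvPolynomial (Fin 3) ℂ} (hF : F.IsHomogeneous d) :
    aeval T.fwd (aeval T.bwd F) = (T.u ^ (k + 1) * T.det) ^ d * F := by
  rw [comp_aeval_apply, funext T.aeval_fwd_bwd, isHomogeneous_aeval_mul_left hF]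
  simp

theorem aeval_bwd_aeval_fwd {d : ℕ} {F : MvPolynomial (Fin 3) ℂ} (hF : F.IsHomogeneous d) :
    aeval T.bwd (aeval T.fwd F) = (T.w ^ (k + 1) * T.det) ^ d * F := by
  rw [comp_aeval_apply, funext T.aeval_bwd_fwd, isHomogeneous_aeval_mul_left hF]
  simp

theorem aeval_cons_X_X_ternary (q : MvPolynomial (Fin 2) ℂ) (z : MvPolynomial (Fin 3) ℂ) :
    aeval ![X 0, X 1, z] (ternary q) = ternary q := by
  rw [aeval_ternary]
  exact aeval_ternary_X_X

theorem u_ne_zero (h : T.det ≠ 0) : T.u ≠ 0 := by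
  intro hu
  have h0 := congrArg (aeval ![(X 0 : MvPolynomial (Fin 3) ℂ), X 1, 0]) hu
  have h1 := congrArg (aeval ![(X 0 : MvPolynomial (Fin 3) ℂ), X 1, 1]) hu
  simp only [u, map_add, map_mul, map_zero, aeval_cons_X_X_ternary, aeval_X, Matrix.cons_val, mul_zero,
    zero_add, mul_one] at h0 h1
  rw [h0] at h1
  exact h (by simp_all [det])

theorem w_ne_zero (h : T.det ≠ 0) : T.w ≠ 0 := by
  intro hw
  have h0 := congrArg (aeval ![(X 0 : MvPolynomial (Fin 3) ℂ), X 1, 0]) hw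
  have h1 := congrArg (aeval ![(X 0 : MvPolynomial (Fin 3) ℂ), X 1, 1]) hw
  simp only [w, map_sub, map_mul, map_zero, aeval_cons_X_X_ternary, aeval_X, Matrix.cons_val, mul_zero,
    zero_sub, neg_eq_zero, mul_one] at h0 h1
  rw [h0] at h1
  exact h (by simp_all [det])

/-- The forms `det ^ 3 * u ^ (3 - δ) * G(x u, y u, v)`. -/
noncomputable def lift (δ : ℕ) : MvPolynomial (Fin 3) ℂ →ₗ[ℂ] MvPolynomial (Fin 3) ℂ :=
  LinearMap.mulLeft ℂ (T.det ^ 3 * T.u ^ (3 - δ)) ∘ₗ (aeval T.fwd).toLinearMap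

theorem lift_apply (δ : ℕ) (G : MvPolynomial (Fin 3) ℂ) :
    T.lift δ G = T.det ^ 3 * T.u ^ (3 - δ) * aeval T.fwd G := rfl

theorem eq_zero_of_lift_eq_zero (h : T.det ≠ 0) {δ d : ℕ} {G : MvPolynomial (Fin 3) ℂ}
    (hG : G.IsHomogeneous d) (h0 : T.lift δ G = 0) : G = 0 := by
  rw [lift_apply] at h0
  have h1 : aeval T.fwd G = 0 :=
    (mul_eq_zero.1 h0).resolve_left (mul_ne_zero (pow_ne_zero _ h) (pow_ne_zero _ (T.u_ne_zero h)))
  have h2 := T.aeval_bwd_aeval_fwd hG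
  rw [h1, map_zero] at h2
  exact (mul_eq_zero.1 h2.symm).resolve_left
    (pow_ne_zero _ (mul_ne_zero (pow_ne_zero _ (T.w_ne_zero h)) h))

theorem eq_lift_of_aeval_bwd_eq (h : T.det ≠ 0) {δ : ℕ} (hδ : δ ≤ 3)
    {F G : MvPolynomial (Fin 3) ℂ} (hF : F.IsHomogeneous (9 * (k + 1) + δ))
    (hFG : aeval T.bwd F = T.w ^ (9 * (k + 1) + δ - 3) * T.det ^ 6 * G) : F = T.lift δ G := by
  have h1 := T.aeval_fwd_aeval_bwd hF
  rw [hFG] at h1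
  simp only [map_mul, map_pow, aeval_fwd_w, aeval_fwd_det] at h1
  have hne : (T.u ^ (k + 1) * T.det) ^ (9 * (k + 1) + δ) ≠ 0 :=
    pow_ne_zero _ (mul_ne_zero (pow_ne_zero _ (T.u_ne_zero h)) h)
  refine mul_left_cancel₀ hne (h1.symm.trans ?_)
  rw [lift_apply]
  obtain ⟨m, hm⟩ : ∃ m, m = 9 * (k + 1) + δ - 3 := ⟨_, rfl⟩
  rw [← hm, show 9 * (k + 1) + δ = m + 3 by omega]
  have hu : T.u ^ (k * m + (2 * k + 2) * 6) = T.u ^ ((k + 1) * (m + 3) + (3 - δ)) := by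
    congr 1
    have : m + (3 - δ) = 9 * (k + 1) := by omega
    nlinarith
  calc _ = T.u ^ (k * m + (2 * k + 2) * 6) * (T.det ^ (m + 6) * aeval T.fwd G) := by ring
    _ = _ := by rw [hu]; ring

end DeJonquieres

theorem vanishesToOrder_one_iff {σ : Type*} {p : σ → ℂ} {F : MvPolynomial σ ℂ} :
    VanishesToOrder p 1 F ↔ eval p F = 0 := by
  simp [VanishesToOrder]

theorem eval_smul_eq_zero {d : ℕ} {F : MvPolynomial (Fin 3) ℂ} (hF : F.IsHomogeneous d)
    {s ζ : ℂ} (h : eval ![s, 1, ζ] F = 0) (y : ℂ) : eval ![y * s, y, y * ζ] F = 0 := by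
  have := isHomogeneous_aeval_mul_left hF y ![s, 1, ζ]
  rw [aeval_eq_eval, aeval_eq_eval, h, mul_zero] at this
  rw [← this]
  congr 2
  ext j
  fin_cases j <;> simp

namespace DeJonquieres

variable {k : ℕ} (T : DeJonquieres k)

theorem lift_mem_linSys {n : ℕ} {p : Fin (n + 1) → Fin 3 → ℂ} {s ζ y : Fin n → ℂ} {c : ℂ}
    (hp0 : p 0 = ![0, 0, c]) (hp : ∀ i : Fin n, p i.succ = ![y i * s i, y i, y i * ζ i])
    (hu : ∀ i, eval ![s i, 1, ζ i] T.u = 0) (hv : ∀ i, eval ![s i, 1, ζ i] T.v = 0)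
    {δ : ℕ} (hδ : δ ≤ 3) {G : MvPolynomial (Fin 3) ℂ} (hG : G.IsHomogeneous δ) :
    T.lift δ G ∈ linSys p (9 * (k + 1) + δ) (qh n (9 * (k + 1) + δ - 3)) := by
  rw [mem_linSys, lift_apply]
  constructor
  · have h := ((T.isHomogeneous_det.pow 3).mul (T.isHomogeneous_u.pow (3 - δ))).mul
      (hG.aeval T.fwd T.isHomogeneous_fwd)
    convert h using 1
    obtain ⟨r, hr⟩ := Nat.exists_eq_add_of_le hδ
    rw [hr, Nat.add_sub_cancel_left, show 9 * (k + 1) = 3 * 3 * (k + 1) by ring]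
    nlinarith
  intro i
  refine Fin.cases ?_ (fun i => ?_) i
  · have hX0 (j : Fin 3) (hj : j ≠ 2) : VanishesToOrder ![0, 0, c] 1 (X j) := by
      rw [vanishesToOrder_one_iff]
      fin_cases j <;> simp at hj ⊢
    have hu0 : VanishesToOrder ![0, 0, c] k T.u := by
      refine .add ?_ (vanishesToOrder_ternary T.hb c).of_succ
      rw [mul_comm]
      exact .mul_left _ (vanishesToOrder_ternary T.ha c)
    have hv0 : VanishesToOrder ![0, 0, c] (k + 1) T.v := by
      refine .add ?_ (vanishesToOrder_ternary T.hb' c).of_succ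
      rw [mul_comm]
      exact .mul_left _ (vanishesToOrder_ternary T.ha' c)
    have hd0 : VanishesToOrder ![0, 0, c] (2 * k + 2) T.det := by
      have h1 := (vanishesToOrder_ternary T.ha c).mul (vanishesToOrder_ternary T.hb' c)
      have h2 := ((vanishesToOrder_ternary T.ha' c).mul
        (vanishesToOrder_ternary T.hb c)).mul_left (-1)
      rw [show k + (k + 2) = 2 * k + 2 by ring] at h1
      rw [show k + 1 + (k + 1) = 2 * k + 2 by ring] at h2
      convert h1.add h2 using 1
      simp only [det]
      ring
    have hf0 : ∀ j, VanishesToOrder ![0, 0, c] (k + 1) (T.fwd j) := by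
      intro j
      fin_cases j
      · rw [add_comm]; exact (hX0 0 (by decide)).mul hu0
      · rw [add_comm]; exact (hX0 1 (by decide)).mul hu0
      · exact hv0
    rw [hp0]
    refine (((hd0.pow 3).mul (hu0.pow (3 - δ))).mul (.aeval_of_isHomogeneous hG hf0)).mono ?_
    obtain ⟨r, hr⟩ := Nat.exists_eq_add_of_le hδ
    simp only [qh, if_true]
    rw [hr, Nat.add_sub_cancel_left]
    have : (δ + r) * k = 3 * k := by rw [hr]
    rw [Nat.sub_le_iff_le_add]
    nlinarith
  · have hui : VanishesToOrder (p i.succ) 1 T.u := by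
      rw [vanishesToOrder_one_iff, hp]
      exact eval_smul_eq_zero T.isHomogeneous_u (hu i) _
    have hvi : VanishesToOrder (p i.succ) 1 T.v := by
      rw [vanishesToOrder_one_iff, hp]
      exact eval_smul_eq_zero T.isHomogeneous_v (hv i) _
    have hdi : VanishesToOrder (p i.succ) 1 T.det := by
      rw [det_eq_mul_v_sub, sub_eq_add_neg, ← neg_mul]
      exact (hvi.mul_left _).add (hui.mul_left _)
    have hfi : ∀ j, VanishesToOrder (p i.succ) 1 (T.fwd j) := by
      intro j
      fin_cases j
      exacts [hui.mul_left _, hui.mul_left _, hvi]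
    refine (((hdi.pow 3).mul (hui.pow (3 - δ))).mul (.aeval_of_isHomogeneous hG hfi)).mono ?_
    simp only [qh, if_neg (Fin.succ_ne_zero i)]
    omega

end DeJonquieres

theorem exists_isHomogeneous_of_mul_eq {σ R : Type*} [CommRing R] {m n : ℕ}
    {F f G : MvPolynomial σ R} (hF : F.IsHomogeneous (m + n)) (hf : f.IsHomogeneous m)
    (h : F = f * G) : ∃ G' : MvPolynomial σ R, G'.IsHomogeneous n ∧ F = f * G' := by
  refine ⟨homogeneousComponent n G, homogeneousComponent_isHomogeneous n G, ?_⟩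
  let := gradedAlgebra (σ := σ) (R := R)
  have h1 := DirectSum.coe_decompose_mul_add_of_left_mem (homogeneousSubmodule σ R) (j := n)
    (b := G) ((mem_homogeneousSubmodule m f).2 hf)
  rw [← h, DirectSum.decompose_of_mem_same _ ((mem_homogeneousSubmodule _ F).2 hF)] at h1
  rw [h1]
  congr 1
  exact decomposition.decompose'_apply G n

theorem mul_prod_pow_dvd {R ι : Type*} [CommRing R] [DecompositionMonoid R] [Fintype ι]
    {f F : R} {g : ι → R} {m n : ℕ} (hg : Pairwise fun i j => IsRelPrime (g i) (g j))
    (hfg : ∀ i, IsRelPrime f (g i)) (hf : f ^ m ∣ F) (hgF : ∀ i, g i ^ n ∣ F) :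
    f ^ m * (∏ i, g i) ^ n ∣ F := by
  refine IsRelPrime.mul_dvd ?_ hf ?_
  · exact (IsRelPrime.prod_right fun i _ => hfg i).pow
  · rw [← Finset.prod_pow]
    exact Fintype.prod_dvd_of_isRelPrime (fun i j hij => (hg hij).pow) hgF

theorem finrank_map_of_forall_eq_zero {K M N : Type*} [DivisionRing K] [AddCommGroup M]
    [AddCommGroup N] [Module K M] [Module K N] {f : M →ₗ[K] N} {S : Submodule K M}
    (h : ∀ x ∈ S, f x = 0 → x = 0) : Module.finrank K (S.map f) = Module.finrank K S := by
  rw [← LinearMap.range_domRestrict]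
  exact LinearMap.finrank_range_of_inj
    ((injective_iff_map_eq_zero _).2 fun x hx => Subtype.ext (h x x.2 hx))

/-- The line through `(0 : 0 : 1)` and `(s : 1 : ζ)`. -/
noncomputable def fibre (s : ℂ) : MvPolynomial (Fin 3) ℂ := X 0 - C s * X 1

theorem aeval_eq_zero_of_fibre_dvd {s : ℂ} {F : MvPolynomial (Fin 3) ℂ} (h : fibre s ∣ F)
    (z : MvPolynomial (Fin 3) ℂ) : aeval ![C s, 1, z] F = 0 := by
  obtain ⟨G, rfl⟩ := h
  simp [fibre, -aeval_eq_bind₁, algebraMap_eq]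

theorem isRelPrime_fibre {s : ℂ} {F z : MvPolynomial (Fin 3) ℂ}
    (h : aeval ![C s, 1, z] F ≠ 0) : IsRelPrime (fibre s) F :=
  (irreducible_X_sub_C_mul_X (by decide) s).isRelPrime_iff_not_dvd.2
    fun hd => h (aeval_eq_zero_of_fibre_dvd hd z)

theorem isRelPrime_fibre_fibre {s s' : ℂ} (h : s ≠ s') : IsRelPrime (fibre s) (fibre s') := by
  refine isRelPrime_fibre (z := 0) ?_
  simp only [fibre, map_sub, map_mul, aeval_X, aeval_C, algebraMap_eq, Matrix.cons_val, mul_one]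
  rw [← C_sub, Ne, C_eq_zero, sub_eq_zero]
  exact h

namespace DeJonquieres

variable {k : ℕ} (T : DeJonquieres k)

theorem isRelPrime_w_fibre {s : ℂ} (h : eval ![s, 1] T.a ≠ 0 ∨ eval ![s, 1] T.a' ≠ 0) :
    IsRelPrime T.w (fibre s) := by
  refine (isRelPrime_fibre (z := X 2) fun h0 => ?_).symm
  have he (q : MvPolynomial (Fin 2) ℂ) : aeval ![(C s : MvPolynomial (Fin 3) ℂ), 1] q =
      C (eval ![s, 1] q) := by
    have := aeval_algebraMap_apply (MvPolynomial (Fin 3) ℂ) ![s, 1] q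
    rw [aeval_eq_eval, algebraMap_eq] at this
    rw [← this]
    congr 2
    ext j
    fin_cases j <;> simp
  simp only [w, map_sub, map_mul, aeval_X, Matrix.cons_val, aeval_ternary, he] at h0
  have h1 := congrArg (eval ![0, 0, 0]) h0
  have h2 := congrArg (eval ![0, 0, 1]) h0
  simp at h1 h2
  simp_all

theorem fibre_dvd_bwd {s ζ : ℂ} (hu : eval ![s, 1, ζ] T.u = 0) (hv : eval ![s, 1, ζ] T.v = 0)
    (j : Fin 3) : fibre s ∣ T.bwd j - T.w * X 1 * C (![s, 1, ζ] j) := by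
  fin_cases j
  · exact ⟨T.w, by simp [bwd, fibre]; ring⟩
  · simp [bwd, mul_comm]
  · have hq (j : Fin 3) : fibre s ∣ ![(X 0 : MvPolynomial (Fin 3) ℂ), X 1, X 1 * C ζ] j -
        X 1 * algebraMap ℂ (MvPolynomial (Fin 3) ℂ) (![s, 1, ζ] j) := by
      fin_cases j
      · simp [fibre, algebraMap_eq, mul_comm]
      · simp
      · simp [algebraMap_eq]
    have h1 := (vanishesToOrder_one_iff.2 hu).pow_dvd_aeval T.isHomogeneous_u hq
    have h2 := (vanishesToOrder_one_iff.2 hv).pow_dvd_aeval T.isHomogeneous_v hq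
    simp only [u, v, map_add, map_mul, aeval_cons_X_X_ternary, aeval_X, Matrix.cons_val,
      pow_one] at h1 h2
    convert h2.sub (h1.mul_left (X 2)) using 1
    simp only [bwd, w, t, Fin.reduceFinMk, Matrix.cons_val]
    ring

theorem exists_lift_eq {n : ℕ} {p : Fin (n + 1) → Fin 3 → ℂ} {s ζ y : Fin n → ℂ} {c c' : ℂ}
    (hc : c ≠ 0) (hp0 : p 0 = ![0, 0, c])
    (hp : ∀ i : Fin n, p i.succ = ![y i * s i, y i, y i * ζ i]) (hy : ∀ i, y i ≠ 0)
    (hs : Function.Injective s) (hc' : c' ≠ 0) (hdet : T.det = C c' * ∏ i, fibre (s i))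
    (hw : ∀ i, eval ![s i, 1] T.a ≠ 0 ∨ eval ![s i, 1] T.a' ≠ 0)
    (hu : ∀ i, eval ![s i, 1, ζ i] T.u = 0) (hv : ∀ i, eval ![s i, 1, ζ i] T.v = 0)
    {δ : ℕ} (hδ : δ ≤ 3) {F : MvPolynomial (Fin 3) ℂ}
    (hF : F ∈ linSys p (9 * (k + 1) + δ) (qh n (9 * (k + 1) + δ - 3))) :
    ∃ G : MvPolynomial (Fin 3) ℂ, G.IsHomogeneous δ ∧ T.lift δ G = F := by
  rw [mem_linSys] at hF
  obtain ⟨hFd, hFp⟩ := hF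
  have h0 : T.w ^ (9 * (k + 1) + δ - 3) ∣ aeval T.bwd F := by
    have h := hFp 0
    rw [hp0] at h
    refine h.pow_dvd_aeval hFd (c := C c⁻¹ * T.t) fun j => ?_
    fin_cases j
    · simp [bwd]
    · simp [bwd]
    · have : C c⁻¹ * T.t * C c = T.t := by
        rw [mul_right_comm, ← C_mul, inv_mul_cancel₀ hc, C_1, one_mul]
      simp [bwd, algebraMap_eq, this]
  have hi (i : Fin n) : fibre (s i) ^ 6 ∣ aeval T.bwd F := by
    have h := hFp i.succ
    rw [hp] at h
    simp only [qh, if_neg (Fin.succ_ne_zero i)] at h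
    refine h.pow_dvd_aeval hFd (c := C (y i)⁻¹ * (T.w * X 1)) fun j => ?_
    convert T.fibre_dvd_bwd (hu i) (hv i) j using 2
    have hyi : C (y i)⁻¹ * C (y i) = (1 : MvPolynomial (Fin 3) ℂ) := by
      rw [← C_mul, inv_mul_cancel₀ (hy i), C_1]
    fin_cases j
    · simp [algebraMap_eq]
      linear_combination (T.w * X 1 * C (s i)) * hyi
    · simp [algebraMap_eq]
      linear_combination (T.w * X 1) * hyi
    · simp [algebraMap_eq]
      linear_combination (T.w * X 1 * C (ζ i)) * hyi
  obtain ⟨G, hG⟩ := mul_prod_pow_dvd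
    (fun i j hij => isRelPrime_fibre_fibre (hs.ne hij)) (fun i => T.isRelPrime_w_fibre (hw i)) h0 hi
  have hG' : aeval T.bwd F = T.w ^ (9 * (k + 1) + δ - 3) * T.det ^ 6 * (C (c'⁻¹ ^ 6) * G) := by
    have hcc : C c' * C c'⁻¹ = (1 : MvPolynomial (Fin 3) ℂ) := by
      rw [← C_mul, mul_inv_cancel₀ hc', C_1]
    rw [hG, hdet, C_pow]
    calc _ = T.w ^ (9 * (k + 1) + δ - 3) * (∏ i, fibre (s i)) ^ 6 * G * (C c' * C c'⁻¹) ^ 6 := by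
          rw [hcc]; ring
      _ = _ := by ring
  have hdeg : (aeval T.bwd F).IsHomogeneous
      (((k + 1) * (9 * (k + 1) + δ - 3) + (2 * k + 2) * 6) + δ) := by
    convert hFd.aeval T.bwd T.isHomogeneous_bwd using 1
    obtain ⟨m, hm⟩ : ∃ m, m = 9 * (k + 1) + δ - 3 := ⟨_, rfl⟩
    rw [← hm]
    have : m + 3 = 9 * (k + 1) + δ := by omega
    nlinarith
  obtain ⟨H, hH, hFH⟩ := exists_isHomogeneous_of_mul_eq hdeg
    ((T.isHomogeneous_w.pow _).mul (T.isHomogeneous_det.pow 6)) hG'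
  have hne : T.det ≠ 0 := by
    rw [hdet]
    exact mul_ne_zero (by simpa using hc')
      (Finset.prod_ne_zero_iff.2 fun i _ => (irreducible_X_sub_C_mul_X (by decide) _).ne_zero)
  exact ⟨H, hH, (T.eq_lift_of_aeval_bwd_eq hne hδ hFd hFH).symm⟩

/-- The linear system of degree `9 (k + 1) + δ` is the image of the forms of degree `δ`. -/
theorem finrank_linSys {n : ℕ} {p : Fin (n + 1) → Fin 3 → ℂ} {s ζ y : Fin n → ℂ} {c c' : ℂ}
    (hc : c ≠ 0) (hp0 : p 0 = ![0, 0, c])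
    (hp : ∀ i : Fin n, p i.succ = ![y i * s i, y i, y i * ζ i]) (hy : ∀ i, y i ≠ 0)
    (hs : Function.Injective s) (hc' : c' ≠ 0) (hdet : T.det = C c' * ∏ i, fibre (s i))
    (hw : ∀ i, eval ![s i, 1] T.a ≠ 0 ∨ eval ![s i, 1] T.a' ≠ 0)
    (hu : ∀ i, eval ![s i, 1, ζ i] T.u = 0) (hv : ∀ i, eval ![s i, 1, ζ i] T.v = 0)
    {δ : ℕ} (hδ : δ ≤ 3) :
    Module.finrank ℂ (linSys p (9 * (k + 1) + δ) (qh n (9 * (k + 1) + δ - 3))) =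
      Module.finrank ℂ (homogeneousSubmodule (Fin 3) ℂ δ) := by
  have hne : T.det ≠ 0 := by
    rw [hdet]
    exact mul_ne_zero (by simpa using hc')
      (Finset.prod_ne_zero_iff.2 fun i _ => (irreducible_X_sub_C_mul_X (by decide) _).ne_zero)
  have hmap : linSys p (9 * (k + 1) + δ) (qh n (9 * (k + 1) + δ - 3)) =
      (homogeneousSubmodule (Fin 3) ℂ δ).map (T.lift δ) := by
    refine Submodule.ext fun F => Iff.trans ⟨fun hF => ?_, ?_⟩ Submodule.mem_map.symm
    · exact T.exists_lift_eq hc hp0 hp hy hs hc' hdet hw hu hv hδ hF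
    · rintro ⟨G, hG, rfl⟩
      exact T.lift_mem_linSys hp0 hp hu hv hδ hG
  rw [hmap]
  exact finrank_map_of_forall_eq_zero fun G hG => T.eq_zero_of_lift_eq_zero hne hG

end DeJonquieres

theorem finrank_homogeneousSubmodule_zero :
    Module.finrank ℂ (homogeneousSubmodule (Fin 3) ℂ 0) = 1 := by
  rw [homogeneousSubmodule_zero, Submodule.one_eq_span]
  exact finrank_span_singleton one_ne_zero

theorem finrank_homogeneousSubmodule_one :
    Module.finrank ℂ (homogeneousSubmodule (Fin 3) ℂ 1) = 3 := by
  rw [homogeneousSubmodule_one_eq_span_X, finrank_span_eq_card]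
  · simp
  · exact linearIndependent_X (Fin 3) ℂ

/-- The pairs `(a, b)` of polynomials with `deg a < l` and `deg b < m` are determined by the values
of `a z + b` at the points `(s i, ζ i)`. -/
def Unisolvent {n : ℕ} (s ζ : Fin n → ℂ) (l m : ℕ) : Prop :=
  ∀ a b : Polynomial ℂ, a.degree < l → b.degree < m →
    (∀ i, ζ i * a.eval (s i) + b.eval (s i) = 0) → a = 0 ∧ b = 0

theorem Unisolvent.exists_eval_eq {n l m : ℕ} {s ζ : Fin n → ℂ} (h : Unisolvent s ζ l m)
    (hn : n = l + m) (f : Fin n → ℂ) : ∃ a b : Polynomial ℂ, a.degree < l ∧ b.degree < m ∧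
      ∀ i, ζ i * a.eval (s i) + b.eval (s i) = f i := by
  let φ : Polynomial.degreeLT ℂ l × Polynomial.degreeLT ℂ m →ₗ[ℂ] Fin n → ℂ :=
    LinearMap.pi fun i => (ζ i • Polynomial.leval (s i) ∘ₗ (Polynomial.degreeLT ℂ l).subtype).coprod
      (Polynomial.leval (s i) ∘ₗ (Polynomial.degreeLT ℂ m).subtype)
  have hφ (x : Polynomial.degreeLT ℂ l × Polynomial.degreeLT ℂ m) (i : Fin n) :
      φ x i = ζ i * x.1.1.eval (s i) + x.2.1.eval (s i) := by
    simp [φ, Polynomial.leval]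
  have hinj : Function.Injective φ := by
    refine (injective_iff_map_eq_zero φ).2 fun x hx => ?_
    obtain ⟨h1, h2⟩ := h x.1 x.2 (Polynomial.mem_degreeLT.1 x.1.2) (Polynomial.mem_degreeLT.1 x.2.2)
      fun i => by rw [← hφ, hx, Pi.zero_apply]
    exact Prod.ext (Subtype.ext h1) (Subtype.ext h2)
  have := (Polynomial.degreeLTEquiv ℂ l).symm.finiteDimensional
  have := (Polynomial.degreeLTEquiv ℂ m).symm.finiteDimensional
  have hsurj := (LinearMap.injective_iff_surjective_of_finrank_eq_finrank (f := φ) (by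
    rw [Module.finrank_prod, (Polynomial.degreeLTEquiv ℂ l).finrank_eq,
      (Polynomial.degreeLTEquiv ℂ m).finrank_eq]
    simp [hn])).1 hinj
  obtain ⟨x, hx⟩ := hsurj f
  exact ⟨x.1, x.2, Polynomial.mem_degreeLT.1 x.1.2, Polynomial.mem_degreeLT.1 x.2.2,
    fun i => by rw [← hφ, hx]⟩

theorem Unisolvent.exists_monic {n l m d : ℕ} {s ζ : Fin n → ℂ} (h : Unisolvent s ζ l m)
    (hn : n = l + m) (hd : m ≤ d) : ∃ a b : Polynomial ℂ, a.degree < l ∧ b.Monic ∧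
      b.natDegree = d ∧ ∀ i, ζ i * a.eval (s i) + b.eval (s i) = 0 := by
  obtain ⟨a, b, ha, hb, hab⟩ := h.exists_eval_eq hn fun i => -s i ^ d
  have hb' : b.degree < d := hb.trans_le (by exact_mod_cast hd)
  refine ⟨a, Polynomial.X ^ d + b, ha, Polynomial.monic_X_pow_add hb', ?_, fun i => ?_⟩
  · refine Polynomial.natDegree_eq_of_degree_eq_some ?_
    rw [Polynomial.degree_add_eq_left_of_degree_lt (by rwa [Polynomial.degree_X_pow]),
      Polynomial.degree_X_pow]
  · rw [Polynomial.eval_add, add_left_comm, hab]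
    simp

theorem eq_C_coeff_mul_nodal {n : ℕ} {s : Fin n → ℂ} (hs : Function.Injective s)
    {D : Polynomial ℂ} (hD : D.natDegree ≤ n) (h : ∀ i, D.eval (s i) = 0) :
    D = Polynomial.C (D.coeff n) * Lagrange.nodal Finset.univ s := by
  refine Polynomial.eq_of_degree_sub_lt_of_eval_index_eq Finset.univ hs.injOn ?_ fun i _ => ?_
  · have h1 : (Lagrange.nodal Finset.univ s).natDegree = n := by
      rw [Lagrange.natDegree_nodal, Finset.card_fin]
    have h2 := (Lagrange.nodal_monic (s := Finset.univ) (v := s)).coeff_natDegree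
    rw [Lagrange.natDegree_nodal, Finset.card_fin] at h2
    rw [Finset.card_fin, Polynomial.degree_lt_iff_coeff_zero]
    intro m hm
    rw [Polynomial.coeff_sub, Polynomial.coeff_C_mul]
    rcases hm.eq_or_lt with hm | hm
    · rw [← hm, h2, mul_one, sub_self]
    · rw [Polynomial.coeff_eq_zero_of_natDegree_lt (hD.trans_lt hm),
        Polynomial.coeff_eq_zero_of_natDegree_lt (h1.trans_lt hm), mul_zero, sub_zero]
  · rw [h, Polynomial.eval_mul, Lagrange.eval_nodal_at_node (Finset.mem_univ i), mul_zero]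

theorem eval_derivative_nodal_ne_zero {n : ℕ} {s : Fin n → ℂ} (hs : Function.Injective s)
    (i : Fin n) : (Lagrange.nodal Finset.univ s).derivative.eval (s i) ≠ 0 := by
  rw [Lagrange.eval_nodal_derivative_eval_node_eq (Finset.mem_univ i)]
  exact Lagrange.eval_nodal_not_at_node fun j hj => hs.ne (Finset.ne_of_mem_erase hj).symm

theorem natDegree_le_of_degree_lt_succ {p : Polynomial ℂ} {k : ℕ}
    (h : p.degree < (k + 1 : ℕ)) : p.natDegree ≤ k :=
  Polynomial.natDegree_le_iff_coeff_eq_zero.2 fun _ hN =>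
    (Polynomial.degree_lt_iff_coeff_zero _ _).1 h _ hN

theorem eval_homogenize_X_one {p : Polynomial ℂ} {n : ℕ} (hp : p.natDegree ≤ n) (x : ℂ) :
    eval ![x, 1] (p.homogenize n) = p.eval x := by
  have := Polynomial.aeval_homogenize_of_eq_one hp ![x, 1] rfl
  simpa [aeval_eq_eval] using this

theorem ternary_homogenize_nodal {n : ℕ} (s : Fin n → ℂ) :
    ternary ((Lagrange.nodal Finset.univ s).homogenize n) = ∏ i, fibre (s i) := by
  have := Polynomial.homogenize_finsetProd (s := Finset.univ) (n := fun _ => 1)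
    (p := fun i : Fin n => (Polynomial.X - Polynomial.C (s i) : Polynomial ℂ)) (by simp)
  simp only [Finset.sum_const, Finset.card_fin, smul_eq_mul, mul_one] at this
  rw [Lagrange.nodal, this, ternary, map_prod]
  simp [fibre]

theorem eval_ternary_cons (q : MvPolynomial (Fin 2) ℂ) (x y z : ℂ) :
    eval ![x, y, z] (ternary q) = eval ![x, y] q := by
  rw [← aeval_eq_eval, ← aeval_eq_eval, aeval_ternary]
  rfl

theorem Unisolvent.exists_deJonquieres {k : ℕ} {s ζ : Fin (2 * (k + 1)) → ℂ}
    (hs : Function.Injective s) (h₁ : Unisolvent s ζ (k + 1) (k + 1))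
    (h₂ : Unisolvent s ζ k (k + 2)) : ∃ (T : DeJonquieres k) (c : ℂ), c ≠ 0 ∧
      T.det = C c * ∏ i, fibre (s i) ∧
      (∀ i, eval ![s i, 1] T.a ≠ 0 ∨ eval ![s i, 1] T.a' ≠ 0) ∧
      (∀ i, eval ![s i, 1, ζ i] T.u = 0) ∧ ∀ i, eval ![s i, 1, ζ i] T.v = 0 := by
  obtain ⟨a, b, ha, hbm, hbd, hu⟩ := h₁.exists_monic (two_mul _) le_rfl
  obtain ⟨a', b', ha', hbm', hbd', hv⟩ := h₁.exists_monic (two_mul _) (Nat.le_succ (k + 1))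
  have had := natDegree_le_of_degree_lt_succ ha
  have had' := natDegree_le_of_degree_lt_succ ha'
  have hlead : a.coeff k ≠ 0 := by
    intro h0
    refine hbm.ne_zero (h₂ a b ?_ ?_ hu).2
    · rw [Polynomial.degree_lt_iff_coeff_zero]
      intro m hm
      rcases hm.eq_or_lt with hm | hm
      · rwa [← hm]
      · exact Polynomial.coeff_eq_zero_of_natDegree_lt (had.trans_lt hm)
    · rw [Polynomial.degree_eq_natDegree hbm.ne_zero, hbd]
      exact_mod_cast Nat.lt_succ_self (k + 1)
  have hD₁ : (a * b').natDegree ≤ k + (k + 2) :=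
    Polynomial.natDegree_mul_le_of_le had hbd'.le
  have hD₂ : (a' * b).natDegree ≤ k + (k + 1) :=
    Polynomial.natDegree_mul_le_of_le had' hbd.le
  have hD : a * b' - a' * b = Polynomial.C (a.coeff k) * Lagrange.nodal Finset.univ s := by
    convert eq_C_coeff_mul_nodal hs (D := a * b' - a' * b) ?_ fun i => ?_ using 3
    · rw [show 2 * (k + 1) = k + (k + 2) by ring, Polynomial.coeff_sub,
        Polynomial.coeff_mul_add_eq_of_natDegree_le had hbd'.le,
        Polynomial.coeff_eq_zero_of_natDegree_lt (p := a' * b) (by omega), sub_zero]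
      have := hbm'.coeff_natDegree
      rw [hbd'] at this
      rw [this, mul_one]
    · exact Polynomial.natDegree_sub_le_of_le (hD₁.trans (by omega)) (hD₂.trans (by omega))
        |>.trans (max_self _).le
    · rw [Polynomial.eval_sub, Polynomial.eval_mul, Polynomial.eval_mul]
      linear_combination a.eval (s i) * hv i - a'.eval (s i) * hu i
  refine ⟨⟨a.homogenize k, b.homogenize (k + 1), a'.homogenize (k + 1), b'.homogenize (k + 2),
    Polynomial.isHomogeneous_homogenize _, Polynomial.isHomogeneous_homogenize _,
    Polynomial.isHomogeneous_homogenize _, Polynomial.isHomogeneous_homogenize _⟩,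
    a.coeff k, hlead, ?_, fun i => ?_, fun i => ?_, fun i => ?_⟩
  · rw [← ternary_homogenize_nodal]
    have := congrArg (fun p : Polynomial ℂ => ternary (p.homogenize (2 * (k + 1)))) hD
    have h1 := Polynomial.homogenize_mul _ _ had hbd'.le
    have h2 := Polynomial.homogenize_mul _ _ (had'.trans k.le_succ) hbd.le
    rw [show k + (k + 2) = 2 * (k + 1) by ring] at h1
    rw [show k + 1 + (k + 1) = 2 * (k + 1) by ring] at h2
    simp only [Polynomial.homogenize_sub, Polynomial.homogenize_C_mul, h1, h2] at this
    simpa [DeJonquieres.det, ternary] using this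
  · rw [eval_homogenize_X_one had, eval_homogenize_X_one (had'.trans k.le_succ)]
    by_contra! h
    have hb0 := hu i
    have hb0' := hv i
    rw [h.1, mul_zero, zero_add] at hb0
    rw [h.2, mul_zero, zero_add] at hb0'
    have := congrArg (fun p : Polynomial ℂ => p.derivative.eval (s i)) hD
    simp [h.1, h.2, hb0, hb0', hlead, eval_derivative_nodal_ne_zero hs] at this
  · simp [DeJonquieres.u, eval_ternary_cons, eval_homogenize_X_one had,
      eval_homogenize_X_one hbd.le, mul_comm, hu]
  · simp [DeJonquieres.v, eval_ternary_cons, eval_homogenize_X_one (had'.trans k.le_succ),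
      eval_homogenize_X_one hbd'.le, mul_comm, hv]

/-- The linear conditions imposed by points `q` on the pairs of binary forms `(a, b)`, with `l`
coefficients of `a` and `n - l` coefficients of `b`, that `a z + b` vanishes there. -/
def conditionMatrix {R : Type*} [CommRing R] {n : ℕ} (l : ℕ) (q : Fin n → Fin 3 → R) :
    Matrix (Fin n) (Fin n) R :=
  Matrix.of fun i j => if (j : ℕ) < l then q i 2 * q i 0 ^ (j : ℕ) * q i 1 ^ (n - j - 1)
    else q i 0 ^ (j - l : ℕ) * q i 1 ^ (n - (j - l))

theorem map_det_conditionMatrix {R S : Type*} [CommRing R] [CommRing S] (φ : R →+* S) {n : ℕ}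
    (l : ℕ) (q : Fin n → Fin 3 → R) :
    φ (conditionMatrix l q).det = (conditionMatrix l fun i j => φ (q i j)).det := by
  rw [φ.map_det]
  congr 1
  ext i j
  simp only [conditionMatrix, RingHom.mapMatrix_apply, Matrix.map_apply, Matrix.of_apply]
  split_ifs <;> simp

theorem conditionMatrix_mulVec {l m : ℕ} {s ζ y : Fin (l + m) → ℂ}
    {q : Fin (l + m) → Fin 3 → ℂ} (hq : ∀ i, q i = ![y i * s i, y i, y i * ζ i])
    (v : Fin (l + m) → ℂ) (i : Fin (l + m)) :
    (conditionMatrix l q).mulVec v i = y i ^ (l + m) *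
      (ζ i * ∑ j : Fin l, v (Fin.castAdd m j) * s i ^ (j : ℕ) +
        ∑ j : Fin m, v (Fin.natAdd l j) * s i ^ (j : ℕ)) := by
  have hpow {a j n : ℕ} (h : a + j = n) : y i ^ n = y i ^ a * y i ^ j := by rw [← h, pow_add]
  rw [Matrix.mulVec, dotProduct, Fin.sum_univ_add, mul_add, Finset.mul_sum, Finset.mul_sum,
    Finset.mul_sum]
  congr 1 <;> refine Finset.sum_congr rfl fun j _ => ?_
  · rw [hpow (show l + m - j - 1 + (j + 1) = l + m by omega)]
    simp [conditionMatrix, hq]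
    ring
  · rw [hpow (show l + m - j + j = l + m by omega)]
    simp [conditionMatrix, hq]
    ring

theorem det_conditionMatrix_ne_zero_iff {n l m : ℕ} (hn : n = l + m) {s ζ y : Fin n → ℂ}
    {q : Fin n → Fin 3 → ℂ} (hq : ∀ i, q i = ![y i * s i, y i, y i * ζ i]) (hy : ∀ i, y i ≠ 0) :
    (conditionMatrix l q).det ≠ 0 ↔ Unisolvent s ζ l m := by
  subst hn
  constructor
  · intro h a b ha hb hab
    rw [← Polynomial.mem_degreeLT] at ha hb
    have h0 := Matrix.eq_zero_of_mulVec_eq_zero h (v := Fin.append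
      (Polynomial.degreeLTEquiv ℂ l ⟨a, ha⟩) (Polynomial.degreeLTEquiv ℂ m ⟨b, hb⟩)) ?_
    · constructor
      · refine congrArg Subtype.val (a₂ := 0) ((Polynomial.degreeLTEquiv ℂ l).map_eq_zero_iff.1
          (funext fun j => ?_) : (⟨a, ha⟩ : Polynomial.degreeLT ℂ l) = 0)
        simpa using congrFun h0 (Fin.castAdd m j)
      · refine congrArg Subtype.val (a₂ := 0) ((Polynomial.degreeLTEquiv ℂ m).map_eq_zero_iff.1
          (funext fun j => ?_) : (⟨b, hb⟩ : Polynomial.degreeLT ℂ m) = 0)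
        simpa using congrFun h0 (Fin.natAdd l j)
    · ext i
      rw [conditionMatrix_mulVec hq]
      simp only [Fin.append_left, Fin.append_right, Pi.zero_apply]
      rw [← Polynomial.eval_eq_sum_degreeLTEquiv ha, ← Polynomial.eval_eq_sum_degreeLTEquiv hb,
        hab, mul_zero]
  · intro h h0
    obtain ⟨v, hv, hv0⟩ := Matrix.exists_mulVec_eq_zero_iff.2 h0
    let a := (Polynomial.degreeLTEquiv ℂ l).symm fun j => v (Fin.castAdd m j)
    let b := (Polynomial.degreeLTEquiv ℂ m).symm fun j => v (Fin.natAdd l j)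
    obtain ⟨ha, hb⟩ := h a b (Polynomial.mem_degreeLT.1 a.2) (Polynomial.mem_degreeLT.1 b.2)
      fun i => by
        have h1 := congrFun hv0 i
        rw [conditionMatrix_mulVec hq, Pi.zero_apply] at h1
        rw [Polynomial.eval_eq_sum_degreeLTEquiv a.2, Polynomial.eval_eq_sum_degreeLTEquiv b.2]
        simpa [a, b] using (mul_eq_zero.1 h1).resolve_left (pow_ne_zero _ (hy i))
    have ha' := (LinearEquiv.map_eq_zero_iff _).1 (Subtype.ext ha : a = 0)
    have hb' := (LinearEquiv.map_eq_zero_iff _).1 (Subtype.ext hb : b = 0)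
    exact hv (funext fun i => Fin.addCases (fun j => congrFun ha' j) (fun j => congrFun hb' j) i)

/-- Unisolvence when `l` points lie on one line and the others on another line. -/
theorem unisolvent_indicator {n l m : ℕ} (hn : n = l + m) {s : Fin n → ℂ}
    (hs : Function.Injective s) : Unisolvent s (fun i => if (i : ℕ) < l then 1 else 0) l m := by
  subst hn
  intro a b ha hb hab
  have hb0 : b = 0 := by
    refine Polynomial.eq_zero_of_degree_lt_of_eval_index_eq_zero (s := Finset.univ)
      (v := fun j : Fin m => s (Fin.natAdd l j)) ?_ (by simpa using hb) fun j _ => ?_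
    · exact (hs.comp (Fin.natAdd_injective m l)).injOn
    · simpa using hab (Fin.natAdd l j)
  refine ⟨?_, hb0⟩
  refine Polynomial.eq_zero_of_degree_lt_of_eval_index_eq_zero (s := Finset.univ)
    (v := fun j : Fin l => s (Fin.castAdd m j)) ?_ (by simpa using ha) fun j _ => ?_
  · exact (hs.comp (Fin.castAdd_injective l m)).injOn
  · simpa [hb0] using hab (Fin.castAdd m j)

/-- The linear forms of a change of coordinates moving the point `x` to a multiple of
`(0 : 0 : 1)`. -/
def shear {R : Type*} [CommRing R] (x r : Fin 3 → R) : Fin 3 → R :=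
  ![x 2 * r 0 - x 0 * r 2, x 2 * r 1 - x 1 * r 2, r 2]

theorem map_shear {R S : Type*} [CommRing R] [CommRing S] (φ : R →+* S) (x r : Fin 3 → R)
    (j : Fin 3) : φ (shear x r j) = shear (fun j => φ (x j)) (fun j => φ (r j)) j := by
  fin_cases j <;> simp [shear]

/-- A polynomial in the coordinates of points whose nonvanishing puts them in the general position
required for the De Jonquières transformation. -/
def discriminant {R : Type*} [CommRing R] {n : ℕ} (k : ℕ) (p : Fin (n + 1) → Fin 3 → R) : R :=
  p 0 2 * (∏ i : Fin n, shear (p 0) (p i.succ) 1) *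
    (∏ x ∈ (Finset.univ : Finset (Fin n)).offDiag,
      (shear (p 0) (p x.1.succ) 0 * shear (p 0) (p x.2.succ) 1 -
        shear (p 0) (p x.2.succ) 0 * shear (p 0) (p x.1.succ) 1)) *
    (conditionMatrix (k + 1) fun i : Fin n => shear (p 0) (p i.succ)).det *
    (conditionMatrix k fun i : Fin n => shear (p 0) (p i.succ)).det

theorem map_discriminant {R S : Type*} [CommRing R] [CommRing S] (φ : R →+* S) {n : ℕ} (k : ℕ)
    (p : Fin (n + 1) → Fin 3 → R) :
    φ (discriminant k p) = discriminant k fun i j => φ (p i j) := by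
  simp only [discriminant, map_mul, map_sub, map_prod, map_det_conditionMatrix, map_shear]

theorem discriminant_X_ne_zero {n : ℕ} (k : ℕ) (hn : n = 2 * (k + 1)) :
    discriminant k (fun i j => X (i, j) : Fin (n + 1) → Fin 3 → MvPolynomial _ ℂ) ≠ 0 := by
  let p (l : ℕ) : Fin (n + 1) → Fin 3 → ℂ :=
    Fin.cons ![0, 0, 1] fun i => ![(i : ℂ), 1, if (i : ℕ) < l then 1 else 0]
  have hp (l : ℕ) (i : Fin n) : shear (p l 0) (p l i.succ) =
      ![1 * (i : ℂ), 1, 1 * if (i : ℕ) < l then 1 else 0] := by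
    ext j
    fin_cases j <;> simp [shear, p]
  have hs : Function.Injective fun i : Fin n => (i : ℂ) := fun i j h =>
    Fin.ext (Nat.cast_injective (R := ℂ) h)
  have hdet (l m : ℕ) (h : n = l + m) :
      (conditionMatrix l fun i : Fin n => shear (p l 0) (p l i.succ)).det ≠ 0 :=
    (det_conditionMatrix_ne_zero_iff h (hp l) fun _ => one_ne_zero).2 (unisolvent_indicator h hs)
  have hne {P : MvPolynomial (Fin (n + 1) × Fin 3) ℂ} (l : ℕ)
      (h : eval (fun x => p l x.1 x.2) P ≠ 0) : P ≠ 0 := by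
    rintro rfl
    exact h (map_zero _)
  refine mul_ne_zero (mul_ne_zero (mul_ne_zero (mul_ne_zero (X_ne_zero _) ?_) ?_) ?_) ?_
  · refine Finset.prod_ne_zero_iff.2 fun i _ => hne 0 ?_
    simp only [map_shear, eval_X, hp]
    simp
  · refine Finset.prod_ne_zero_iff.2 fun x hx => hne 0 ?_
    simp only [map_sub, map_mul, map_shear, eval_X, hp]
    simpa [sub_eq_zero, Fin.ext_iff] using hx
  · refine hne (k + 1) ?_
    simp only [map_det_conditionMatrix, map_shear, eval_X]
    exact hdet _ (k + 1) (by omega)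
  · refine hne k ?_
    simp only [map_det_conditionMatrix, map_shear, eval_X]
    exact hdet _ (k + 2) (by omega)

theorem finrank_linSys_of_discriminant_ne_zero {k : ℕ} {p : Fin (2 * (k + 1) + 1) → Fin 3 → ℂ}
    (h : discriminant k p ≠ 0) {δ : ℕ} (hδ : δ ≤ 3) :
    Module.finrank ℂ (linSys p (9 * (k + 1) + δ) (qh (2 * (k + 1)) (9 * (k + 1) + δ - 3))) =
      Module.finrank ℂ (homogeneousSubmodule (Fin 3) ℂ δ) := by
  simp only [discriminant, mul_ne_zero_iff, Finset.prod_ne_zero_iff] at h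
  obtain ⟨⟨⟨⟨hc, hy⟩, hs⟩, h₁⟩, h₂⟩ := h
  replace hy (i) := hy i (Finset.mem_univ i)
  let f : Fin 3 → MvPolynomial (Fin 3) ℂ := shear (fun j => C (p 0 j)) X
  let g : Fin 3 → MvPolynomial (Fin 3) ℂ :=
    ![C (p 0 2)⁻¹ * (X 0 + C (p 0 0) * X 2), C (p 0 2)⁻¹ * (X 1 + C (p 0 1) * X 2), X 2]
  have hcc : C (p 0 2) * C (p 0 2)⁻¹ = (1 : MvPolynomial (Fin 3) ℂ) := by
    rw [← C_mul, mul_inv_cancel₀ hc, C_1]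
  have hl (i : Fin 3) (a b : ℂ) :
      (C a * (X i + C b * X 2) : MvPolynomial (Fin 3) ℂ).IsHomogeneous 1 :=
    ((isHomogeneous_X ℂ i).add ((isHomogeneous_X ℂ 2).C_mul b)).C_mul a
  have hl' (i : Fin 3) (a b : ℂ) :
      (C a * X i - C b * X 2 : MvPolynomial (Fin 3) ℂ).IsHomogeneous 1 :=
    ((isHomogeneous_X ℂ i).C_mul a).sub ((isHomogeneous_X ℂ 2).C_mul b)
  rw [finrank_linSys_eq (q := fun i => shear (p 0) (p i)) (f := f) (g := g)]
  · let q (i : Fin (2 * (k + 1))) := shear (p 0) (p i.succ)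
    have hq (i) : q i = ![q i 1 * (q i 0 / q i 1), q i 1, q i 1 * (q i 2 / q i 1)] := by
      rw [mul_div_cancel₀ _ (hy i), mul_div_cancel₀ _ (hy i)]
      ext j
      fin_cases j <;> rfl
    have hs' : Function.Injective fun i => q i 0 / q i 1 := by
      intro i j hij
      by_contra hne
      refine hs (i, j) (by simpa using hne) (sub_eq_zero.2 ?_)
      exact (div_eq_div_iff (hy i) (hy j)).1 hij
    obtain ⟨T, c', hc', hdet, hw, hu, hv⟩ := Unisolvent.exists_deJonquieres hs'
      ((det_conditionMatrix_ne_zero_iff (two_mul _) hq hy).1 h₁)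
      ((det_conditionMatrix_ne_zero_iff (by ring) hq hy).1 h₂)
    refine T.finrank_linSys hc ?_ hq hy hs' hc' hdet hw hu hv hδ
    simp [shear, mul_comm]
  · intro j
    fin_cases j
    exacts [hl' 0 _ _, hl' 1 _ _, isHomogeneous_X ℂ 2]
  · intro j
    fin_cases j
    exacts [hl 0 _ _, hl 1 _ _, isHomogeneous_X ℂ 2]
  · intro j
    fin_cases j
    · simp [f, g, shear, algebraMap_eq]
      linear_combination X 0 * hcc
    · simp [f, g, shear, algebraMap_eq]
      linear_combination X 1 * hcc
    · simp [f, g, shear]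
  · intro j
    fin_cases j
    · simp [f, g, shear, algebraMap_eq]
      linear_combination (X 0 + C (p 0 0) * X 2) * hcc
    · simp [f, g, shear, algebraMap_eq]
      linear_combination (X 1 + C (p 0 1) * X 2) * hcc
    · simp [f, g, shear]
  · intro i
    funext j
    simp [f, map_shear]

theorem virtDim_qh (d n m : ℕ) : virtDim d (qh n m) =
    (d : ℤ) * (d + 3) / 2 - ((m : ℤ) * (m + 1) / 2 + n * 21) := by
  simp [virtDim, qh, Fin.sum_univ_succ, Fin.succ_ne_zero]

theorem special_L_9e_families (e : ℕ) (he : 1 ≤ e) :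
    virtDim (9 * e) (qh (2 * e) (9 * e - 3)) = -6 * (e : ℤ) - 3 ∧
    virtDim (9 * e + 1) (qh (2 * e) (9 * e - 2)) = -6 * (e : ℤ) + 1 ∧
    Generically (2 * e + 1) (fun p =>
      (projDim p (9 * e) (qh (2 * e) (9 * e - 3)) = 0 ∧
        projDim p (9 * e) (qh (2 * e) (9 * e - 3)) >
          max (-1) (virtDim (9 * e) (qh (2 * e) (9 * e - 3)))) ∧
      (projDim p (9 * e + 1) (qh (2 * e) (9 * e - 2)) = 2 ∧
        projDim p (9 * e + 1) (qh (2 * e) (9 * e - 2)) >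
          max (-1) (virtDim (9 * e + 1) (qh (2 * e) (9 * e - 2))))) := by
  have hv₁ : virtDim (9 * e) (qh (2 * e) (9 * e - 3)) = -6 * (e : ℤ) - 3 := by
    rw [virtDim_qh]
    push_cast [show 3 ≤ 9 * e by omega]
    have h : (9 * e * (9 * e + 3) : ℤ) = (9 * e - 3) * (9 * e - 3 + 1) + (36 * e - 3) * 2 := by
      ring
    rw [h, Int.add_mul_ediv_right _ _ two_ne_zero]
    ring
  have hv₂ : virtDim (9 * e + 1) (qh (2 * e) (9 * e - 2)) = -6 * (e : ℤ) + 1 := by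
    rw [virtDim_qh]
    push_cast [show 2 ≤ 9 * e by omega]
    have h : ((9 * e + 1) * (9 * e + 1 + 3) : ℤ) =
        (9 * e - 2) * (9 * e - 2 + 1) + (36 * e + 1) * 2 := by
      ring
    rw [h, Int.add_mul_ediv_right _ _ two_ne_zero]
    ring
  refine ⟨hv₁, hv₂, ?_⟩
  rw [hv₁, hv₂]
  obtain ⟨k, rfl⟩ := Nat.exists_eq_add_of_le' he
  refine ⟨discriminant k fun i j => X (i, j), discriminant_X_ne_zero k rfl, fun p _ hp => ?_⟩
  rw [map_discriminant] at hp
  simp only [eval_X] at hp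
  have h₁ : projDim p (9 * (k + 1)) (qh (2 * (k + 1)) (9 * (k + 1) - 3)) = 0 := by
    have := finrank_linSys_of_discriminant_ne_zero hp (Nat.zero_le 3)
    rw [add_zero, finrank_homogeneousSubmodule_zero] at this
    rw [projDim, this]
    rfl
  have h₂ : projDim p (9 * (k + 1) + 1) (qh (2 * (k + 1)) (9 * (k + 1) - 2)) = 2 := by
    have := finrank_linSys_of_discriminant_ne_zero hp (show 1 ≤ 3 by decide)
    rw [finrank_homogeneousSubmodule_one] at this
    rw [projDim, show 9 * (k + 1) - 2 = 9 * (k + 1) + 1 - 3 by omega, this]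
    rfl
  rw [h₁, h₂]
  omega
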